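/- arXiv:2603.28974 — 2 statements merged into one kernel-verified Lean document; each statement's English description precedes it below -/
import Mathlib

section
/- For every integer k ≥ 2 and every real λ > 0, lim_{g → 0⁺} [1 − (2/(k−1)!)·(g/λ)^{k/2}·K(k, 2·√(g/λ))] / (g/λ) = 1/(k−1). -/
open MeasureTheory Real Set Filter Topology

/-- Modified Bessel function of the second kind of integer order, via its
integral representation `K(ν, x) = ∫₀^∞ exp(−x·cosh t)·cosh(ν·t) dt`. -/
noncomputable def besselK (ν : ℕ) (x : ℝ) : ℝ :=
  ∫ t in Set.Ioi (0 : ℝ), Real.exp (-(x * Real.cosh t)) * Real.cosh ((ν : ℝ) * t)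

/-! Let `Γ_b(a) = ∫₀^∞ s^(a-1) exp(-s - b/s) ds`. The substitution `s = √b · eᵗ` gives
`Γ_b(k) = 2 b^(k/2) K(k, 2√b)`, so the CDF at `b = g/λ` is `1 - Γ_b(k) / Γ(k)`. Differentiating
under the integral at `b = 0⁺`, where the integrand loses a factor `s`, yields the slope
`Γ(k-1) / Γ(k) = 1 / (k-1)`. -/

lemma abs_exp_neg_sub_one_le {u : ℝ} (hu : 0 ≤ u) : |rexp (-u) - 1| ≤ u := by
  rw [abs_sub_comm, abs_of_nonneg (sub_nonneg.2 (exp_le_one_iff.2 (neg_nonpos.2 hu)))]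
  linarith [one_sub_le_exp_neg u]

lemma tendsto_inv_mul_exp_neg_mul_sub_one (c : ℝ) :
    Tendsto (fun y ↦ y⁻¹ * (rexp (-(y * c)) - 1)) (𝓝[>] 0) (𝓝 (-c)) := by
  have h : HasDerivAt (fun y ↦ rexp (-(y * c))) (-c) 0 := by
    simpa using ((hasDerivAt_id (0 : ℝ)).mul_const c).neg.exp
  simpa using h.tendsto_slope_zero_right

section LaplaceTransform

variable {α E : Type*} [MeasurableSpace α] {μ : Measure α} [NormedAddCommGroup E] [NormedSpace ℝ E]

lemma integrable_exp_neg_mul_smul {f : α → E} {φ : α → ℝ} {y : ℝ} (hy : 0 ≤ y)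
    (hf : Integrable f μ) (hφ : AEMeasurable φ μ) (hφ_nonneg : 0 ≤ᵐ[μ] φ) :
    Integrable (fun x ↦ rexp (-(y * φ x)) • f x) μ := by
  refine hf.bdd_smul 1 (by fun_prop) ?_
  filter_upwards [hφ_nonneg] with x hx
  rw [norm_of_nonneg (exp_pos _).le, exp_le_one_iff, neg_nonpos]
  exact mul_nonneg hy hx

lemma hasDerivWithinAt_integral_exp_neg_mul_smul {f : α → E} {φ : α → ℝ}
    (hf : Integrable f μ) (hφ : AEMeasurable φ μ) (hφ_nonneg : 0 ≤ᵐ[μ] φ)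
    (hφf : Integrable (fun x ↦ φ x • f x) μ) :
    HasDerivWithinAt (fun y ↦ ∫ x, rexp (-(y * φ x)) • f x ∂μ) (-∫ x, φ x • f x ∂μ)
      (Ioi 0) 0 := by
  rw [hasDerivWithinAt_iff_tendsto_slope' self_notMem_Ioi, ← integral_neg]
  have h_slope : Tendsto (fun y ↦ ∫ x, (y⁻¹ * (rexp (-(y * φ x)) - 1)) • f x ∂μ) (𝓝[>] 0)
      (𝓝 (∫ x, -(φ x • f x) ∂μ)) := by
    refine tendsto_integral_filter_of_dominated_convergence (fun x ↦ ‖φ x • f x‖)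
      (.of_forall fun y ↦ .smul (by fun_prop) hf.1) ?_ hφf.norm ?_
    · filter_upwards [self_mem_nhdsWithin] with y (hy : 0 < y)
      filter_upwards [hφ_nonneg] with x hx
      rw [norm_smul, norm_smul, norm_mul, norm_inv, norm_of_nonneg hy.le, norm_of_nonneg hx]
      gcongr
      rw [inv_mul_le_iff₀ hy]
      exact abs_exp_neg_sub_one_le (mul_nonneg hy.le hx)
    · filter_upwards with x
      simpa only [neg_smul] using
        (tendsto_inv_mul_exp_neg_mul_sub_one (φ x)).smul_const (f x)
  refine h_slope.congr' ?_
  filter_upwards [self_mem_nhdsWithin] with y (hy : 0 < y)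
  have h_sub := integral_sub (integrable_exp_neg_mul_smul hy.le hf hφ hφ_nonneg) hf
  simp only [slope_def_module, sub_zero, zero_mul, neg_zero, exp_zero, one_smul, ← h_sub,
    ← integral_smul, mul_smul, sub_smul]

end LaplaceTransform

/-- The extended gamma function `Γ_b(a) = ∫₀^∞ exp(-b/s) exp(-s) s^(a-1) ds` of Chaudhry and
Zubair. For `a > 0` and `b ≥ 0`, dividing it by `Γ(a)` gives the tail at `b` of the K-distribution
with shape `a` and unit scale. -/
noncomputable def extendedGamma (a b : ℝ) : ℝ :=
  ∫ s in Ioi (0 : ℝ), rexp (-(b / s)) * (rexp (-s) * s ^ (a - 1))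

lemma extendedGamma_zero {a : ℝ} (ha : 0 < a) : extendedGamma a 0 = Gamma a := by
  simp [extendedGamma, Gamma_eq_integral ha]

lemma hasDerivWithinAt_extendedGamma_zero {a : ℝ} (ha : 1 < a) :
    HasDerivWithinAt (extendedGamma a) (-Gamma (a - 1)) (Ioi 0) 0 := by
  have h_inv_mul : ∀ s ∈ Ioi (0 : ℝ),
      rexp (-s) * s ^ (a - 1 - 1) = s⁻¹ * (rexp (-s) * s ^ (a - 1)) := by
    intro s hs
    rw [rpow_sub_one (ne_of_gt hs) (a - 1)]
    ring
  have h_deriv := hasDerivWithinAt_integral_exp_neg_mul_smul (φ := fun s ↦ s⁻¹)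
    (GammaIntegral_convergent (zero_lt_one.trans ha)) (by fun_prop)
    (ae_restrict_of_forall_mem measurableSet_Ioi fun s hs ↦ inv_nonneg.2 (le_of_lt hs))
    ((GammaIntegral_convergent (sub_pos.2 ha)).congr_fun h_inv_mul measurableSet_Ioi)
  rw [Gamma_eq_integral (sub_pos.2 ha), setIntegral_congr_fun measurableSet_Ioi h_inv_mul]
  exact h_deriv

lemma hasDerivWithinAt_one_sub_extendedGamma_div_Gamma_zero {a : ℝ} (ha : 1 < a) :
    HasDerivWithinAt (fun b ↦ 1 - extendedGamma a b / Gamma a) (1 / (a - 1)) (Ioi 0) 0 := by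
  have ha' : a - 1 ≠ 0 := (sub_pos.2 ha).ne'
  have h_ratio : -(-Gamma (a - 1) / Gamma a) = 1 / (a - 1) := by
    have h_Gamma : Gamma a = (a - 1) * Gamma (a - 1) := by simpa using Gamma_add_one ha'
    have : Gamma (a - 1) ≠ 0 := (Gamma_pos_of_pos (sub_pos.2 ha)).ne'
    rw [h_Gamma]
    field_simp
  exact h_ratio ▸ ((hasDerivWithinAt_extendedGamma_zero ha).div_const _).const_sub 1

lemma integral_exp_smul_comp_exp {E : Type*} [NormedAddCommGroup E] [NormedSpace ℝ E]
    (f : ℝ → E) : ∫ t, rexp t • f (rexp t) = ∫ s in Ioi 0, f s := by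
  simpa [abs_of_pos (exp_pos _)] using (integral_image_eq_integral_abs_deriv_smul
    MeasurableSet.univ (fun t _ ↦ (hasDerivAt_exp t).hasDerivWithinAt) exp_injective.injOn f).symm

lemma extendedGamma_eq_rpow_mul_integral (a : ℝ) {b : ℝ} (hb : 0 < b) :
    extendedGamma a b = b ^ (a / 2) * ∫ t, rexp (-(2 * √b * cosh t)) * rexp (a * t) := by
  rw [extendedGamma, ← integral_exp_smul_comp_exp, ← integral_add_right_eq_self _ (log √b),
    ← integral_const_mul]
  congr with t
  have h_exp : rexp (t + log √b) = √b * rexp t := by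
    rw [exp_add, exp_log (sqrt_pos.2 hb), mul_comm]
  have h_div : b / (√b * rexp t) = √b * rexp (-t) := by
    rw [← div_div, div_sqrt, exp_neg, div_eq_mul_inv]
  have h_rpow : √b * rexp t * (√b * rexp t) ^ (a - 1) = b ^ (a / 2) * rexp (a * t) := by
    rw [mul_comm, ← rpow_add_one (by positivity), sub_add_cancel,
      mul_rpow (sqrt_nonneg b) (exp_pos t).le, sqrt_eq_rpow, ← rpow_mul hb.le, ← exp_mul,
      mul_comm t, one_div_mul_eq_div]
  have h_cosh : rexp (-(2 * √b * cosh t)) =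
      rexp (-(√b * rexp (-t))) * rexp (-(√b * rexp t)) := by
    rw [← exp_add, cosh_eq]
    ring_nf
  rw [h_exp, h_div, h_cosh, smul_eq_mul]
  linear_combination (rexp (-(√b * rexp (-t))) * rexp (-(√b * rexp t))) * h_rpow

lemma one_add_sq_div_two_le_cosh (t : ℝ) : 1 + t ^ 2 / 2 ≤ cosh t := by
  have h_sinh : (t / 2) ^ 2 ≤ sinh (t / 2) ^ 2 := by
    rw [sq_le_sq, abs_sinh]
    exact self_le_sinh_iff.2 (abs_nonneg _)
  have h_cosh : cosh t = 1 + 2 * sinh (t / 2) ^ 2 := by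
    have h_double := cosh_two_mul (t / 2)
    rw [mul_div_cancel₀ t two_ne_zero, cosh_sq] at h_double
    linarith
  linarith

lemma integrable_exp_neg_mul_cosh_mul_exp_mul {x : ℝ} (hx : 0 < x) (a : ℝ) :
    Integrable fun t ↦ rexp (-(x * cosh t)) * rexp (a * t) := by
  have h_gauss : Integrable fun t : ℝ ↦ rexp (-(x / 2) * t ^ 2 + a * t) := by
    have h := (integrable_cexp_quadratic (b := (x / 2 : ℝ)) (by simpa using hx) a 0).norm
    refine h.congr (.of_forall fun t ↦ ?_)
    simp [Complex.norm_exp, ← Complex.ofReal_pow]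
  refine h_gauss.mono' (by fun_prop) (.of_forall fun t ↦ ?_)
  rw [← exp_add, norm_of_nonneg (exp_pos _).le, exp_le_exp]
  nlinarith [one_add_sq_div_two_le_cosh t]

lemma two_mul_besselK_eq_integral (ν : ℕ) {x : ℝ} (hx : 0 < x) :
    2 * besselK ν x = ∫ t, rexp (-(x * cosh t)) * rexp (ν * t) := by
  have h_abs (t : ℝ) : rexp (-(x * cosh |t|)) * cosh (ν * |t|) =
      rexp (-(x * cosh t)) * cosh (ν * t) := by
    rw [cosh_abs, ← cosh_abs (ν * t), abs_mul, Nat.abs_cast]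
  have h_int := integrable_exp_neg_mul_cosh_mul_exp_mul hx ν
  have h_neg : ∫ t, rexp (-(x * cosh t)) * rexp (ν * -t) =
      ∫ t, rexp (-(x * cosh t)) * rexp (ν * t) := by
    simpa only [cosh_neg] using
      integral_neg_eq_self (fun t ↦ rexp (-(x * cosh t)) * rexp (ν * t)) volume
  calc 2 * besselK ν x = ∫ t, rexp (-(x * cosh t)) * cosh (ν * t) := by
        simp only [besselK, ← integral_comp_abs, h_abs]
    _ = ∫ t, (rexp (-(x * cosh t)) * rexp (ν * t) + rexp (-(x * cosh t)) * rexp (ν * -t)) / 2 := by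
        congr with t
        rw [cosh_eq (ν * t), mul_neg]
        ring
    _ = ∫ t, rexp (-(x * cosh t)) * rexp (ν * t) := by
        rw [integral_div, integral_add h_int (by simpa only [cosh_neg] using h_int.comp_neg),
          h_neg, add_self_div_two]

lemma extendedGamma_natCast_eq_besselK (ν : ℕ) {b : ℝ} (hb : 0 < b) :
    extendedGamma ν b = 2 * b ^ ((ν : ℝ) / 2) * besselK ν (2 * √b) := by
  rw [extendedGamma_eq_rpow_mul_integral ν hb, ← two_mul_besselK_eq_integral ν (by positivity)]
  ring

/-- High-SNR asymptotic of the shape-`k` K-distribution CDF for `k ≥ 2`: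
`[1 − (2/(k−1)!)·(g/λ)^{k/2}·K(k, 2·√(g/λ))] / (g/λ) → 1/(k−1)` as `g → 0⁺`. -/
theorem Kk_cdf_asymptotic (k : ℕ) (hk : 2 ≤ k) (lam : ℝ) (hlam : 0 < lam) :
    Filter.Tendsto
      (fun g : ℝ =>
        (1 - 2 / (Nat.factorial (k - 1) : ℝ) * (g / lam) ^ ((k : ℝ) / 2) *
          besselK k (2 * Real.sqrt (g / lam))) / (g / lam))
      (nhdsWithin 0 (Set.Ioi 0)) (nhds (1 / ((k : ℝ) - 1))) := by
  have h_one_lt : (1 : ℝ) < k := by exact_mod_cast hk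
  have h_Gamma : Gamma k = (k - 1).factorial := by
    rw [← Gamma_nat_eq_factorial, Nat.cast_pred (by lia), sub_add_cancel]
  have h_zero : extendedGamma k 0 / Gamma k = 1 := by
    rw [extendedGamma_zero (by positivity), div_self (Gamma_pos_of_pos (by positivity)).ne']
  have h_slope := (hasDerivWithinAt_iff_tendsto_slope' self_notMem_Ioi).1
    (hasDerivWithinAt_one_sub_extendedGamma_div_Gamma_zero h_one_lt)
  have h_scale : Tendsto (fun g ↦ g / lam) (𝓝[>] 0) (𝓝[>] 0) := by
    simpa only [div_eq_mul_inv, zero_mul, id_eq] using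
      TendstoNhdsWithinIoi.mul_const (inv_pos.2 hlam) (tendsto_id (x := 𝓝[>] (0 : ℝ)))
  refine (h_slope.comp h_scale).congr' ?_
  filter_upwards [self_mem_nhdsWithin] with g hg
  rw [Function.comp_apply, slope_def_field, h_zero, sub_self, sub_zero, sub_zero,
    extendedGamma_natCast_eq_besselK k (div_pos hg hlam), h_Gamma]
  ring
end

section
/- Let m ≥ 2 be an integer and c, λ > 0 reals. Define, for γ > 0, P(γ) := 1 − (2/(m−1)!)·(c/(λ·γ))^{m/2}·K(m, 2·√(c/(λ·γ))). Then lim_{γ → ∞} −ln(P(γ))/ln(γ) = 1; that is, the diversity order equals one. -/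
open MeasureTheory Real Set Filter Topology

/-- Exact outage probability of the equal-eigenvalue FRIS case with threshold `R̃ = c/γ`:
`P(γ) = 1 − (2/(m−1)!)·(c/(λ·γ))^{m/2}·K(m, 2·√(c/(λ·γ)))`. -/
noncomputable def outageP (m : ℕ) (c lam γ : ℝ) : ℝ :=
  1 - 2 / (Nat.factorial (m - 1) : ℝ) * (c / (lam * γ)) ^ ((m : ℝ) / 2) *
    besselK m (2 * Real.sqrt (c / (lam * γ)))

/-!
With `z = c / (λγ)`, the substitution `s = √z * exp t` turns the Bessel integral into the Laplace
transform of an inverse gamma variable: `P(γ) = 𝔼[1 - exp (-z / S)]` for `S` of law `Γ(m, 1)`.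
For `m ≥ 2` the variable `S⁻¹` has finite mean `1 / (m - 1)`, so dominated convergence gives
`P(γ) ~ z / (m - 1)` as `z → 0⁺`. The multiplicity `m`
only enters the constant of this linear decay in `γ⁻¹`, not the exponent.
-/

open ProbabilityTheory

section BesselK

theorem one_add_sq_div_four_le_cosh (t : ℝ) : 1 + t ^ 2 / 4 ≤ cosh t := by
  have h_exp : 1 + |t| + |t| ^ 2 / 2 ≤ exp |t| := quadratic_le_exp_of_nonneg (abs_nonneg t)
  have h_exp_neg : -|t| + 1 ≤ exp (-|t|) := add_one_le_exp _
  rw [sq_abs] at h_exp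
  rw [← cosh_abs, cosh_eq]
  linarith

theorem integrable_exp_neg_mul_cosh_mul_exp {x : ℝ} (hx : 0 < x) (p : ℝ) :
    Integrable fun t : ℝ => exp (-(x * cosh t)) * exp (p * t) := by
  have h_gaussian : Integrable fun t : ℝ => exp (2 * p ^ 2 / x) * exp (-(x / 8) * t ^ 2) :=
    (integrable_exp_neg_mul_sq (by positivity)).const_mul _
  refine h_gaussian.mono' (by fun_prop) (ae_of_all _ fun t => ?_)
  rw [norm_of_nonneg (by positivity), ← exp_add, ← exp_add, exp_le_exp]
  have h_young : p * t ≤ 2 * p ^ 2 / x + x / 8 * t ^ 2 := by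
    have h_sq : 2 * p ^ 2 / x + x / 8 * t ^ 2 - p * t = 2 * (p - x * t / 4) ^ 2 / x := by
      field_simp
      ring
    have : 0 ≤ 2 * (p - x * t / 4) ^ 2 / x := by positivity
    linarith
  have h_cosh : x * (1 + t ^ 2 / 4) ≤ x * cosh t := by
    gcongr
    exact one_add_sq_div_four_le_cosh t
  linarith

theorem two_mul_besselK (ν : ℕ) {x : ℝ} (hx : 0 < x) :
    2 * besselK ν x = ∫ t : ℝ, exp (-(x * cosh t)) * exp (ν * t) := by
  set f : ℝ → ℝ := fun t => exp (-(x * cosh t)) * exp (ν * t) with hf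
  have h_int : Integrable f := integrable_exp_neg_mul_cosh_mul_exp hx ν
  have h_even (t : ℝ) :
      exp (-(x * cosh |t|)) * cosh (ν * |t|) = (f t + f (-t)) / 2 := by
    have h_abs : (ν : ℝ) * |t| = |ν * t| := by rw [abs_mul, Nat.abs_cast]
    simp only [hf, h_abs, cosh_abs, cosh_neg, cosh_eq (ν * t), mul_neg]
    ring
  calc 2 * besselK ν x = ∫ t, exp (-(x * cosh |t|)) * cosh (ν * |t|) :=
        (integral_comp_abs (f := fun t => exp (-(x * cosh t)) * cosh (ν * t))).symm
    _ = ((∫ t, f t) + ∫ t, f (-t)) / 2 := by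
        simp only [h_even]
        rw [integral_div, integral_add h_int h_int.comp_neg]
    _ = ∫ t, f t := by
        rw [integral_neg_eq_self]
        ring

theorem integral_comp_exp {E : Type*} [NormedAddCommGroup E] [NormedSpace ℝ E] (g : ℝ → E) :
    ∫ t, exp t • g (exp t) = ∫ s in Ioi 0, g s := by
  rw [← range_exp, ← image_univ, integral_image_eq_integral_abs_deriv_smul MeasurableSet.univ
    (fun t _ => (hasDerivAt_exp t).hasDerivWithinAt) exp_injective.injOn]
  simp only [abs_exp, Measure.restrict_univ]

theorem integral_rpow_mul_exp_neg_mul_mul_exp_neg_mul_inv (p : ℝ) {r z : ℝ} (hr : 0 < r)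
    (hz : 0 < z) :
    ∫ s in Ioi (0 : ℝ), s ^ (p - 1) * exp (-(r * s)) * exp (-(z * s⁻¹)) =
      (z / r) ^ (p / 2) * ∫ t, exp (-(2 * √(r * z) * cosh t)) * exp (p * t) := by
  -- `s = √(z / r) * exp t` makes the two exponents `r * s` and `z / s` symmetric.
  set q := √(z / r) with hq
  have hq0 : 0 < q := sqrt_pos.2 (by positivity)
  have h_left : r * q = √(r * z) := by
    rw [hq, eq_comm, sqrt_eq_iff_mul_self_eq (by positivity) (by positivity), mul_mul_mul_comm,
      mul_self_sqrt (by positivity)]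
    field_simp
  have h_right : z * q⁻¹ = √(r * z) := by
    have h_sq : q * q = z / r := mul_self_sqrt (by positivity)
    rw [← h_left, mul_inv_eq_iff_eq_mul₀ hq0.ne', mul_assoc, h_sq]
    field_simp
  have h_pow : q ^ p = (z / r) ^ (p / 2) := by
    rw [hq, sqrt_eq_rpow, ← rpow_mul (by positivity), one_div_mul_eq_div]
  have h_integrand (t : ℝ) :
      q • exp t • ((q * exp t) ^ (p - 1) * exp (-(r * (q * exp t))) *
        exp (-(z * (q * exp t)⁻¹))) =
      q ^ p * (exp (-(2 * √(r * z) * cosh t)) * exp (p * t)) := by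
    have h_exponent :
        -(2 * √(r * z) * cosh t) = -(r * (q * exp t)) + -(z * (q * exp t)⁻¹) := by
      rw [mul_inv, ← exp_neg, ← mul_assoc, ← mul_assoc, h_left, h_right, cosh_eq]
      ring
    rw [h_exponent, exp_add, rpow_sub_one (by positivity), mul_rpow hq0.le (exp_pos t).le,
      ← exp_mul, mul_comm t p, smul_eq_mul, smul_eq_mul]
    field_simp
  rw [← mul_zero q, ← integral_comp_mul_left_Ioi' _ _ hq0, ← integral_comp_exp, ← integral_smul,
    ← h_pow, ← integral_const_mul]
  exact integral_congr_ae (ae_of_all _ h_integrand)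

end BesselK

section GammaDistribution

theorem measurable_gammaPDF (a r : ℝ) : Measurable (gammaPDF a r) :=
  (measurable_gammaPDFReal a r).ennreal_ofReal

theorem ae_pos_gammaMeasure (a r : ℝ) : ∀ᵐ s ∂gammaMeasure a r, 0 < s := by
  rw [gammaMeasure, ae_withDensity_iff (measurable_gammaPDF a r)]
  filter_upwards [Measure.ae_ne volume 0] with s hs h_pdf
  exact lt_of_le_of_ne (not_lt.1 fun hs_neg => h_pdf (gammaPDF_of_neg hs_neg)) hs.symm

variable {a r : ℝ}

theorem integral_gammaMeasure {E : Type*} [NormedAddCommGroup E] [NormedSpace ℝ E]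
    (ha : 0 < a) (hr : 0 < r) (f : ℝ → E) :
    ∫ s, f s ∂gammaMeasure a r =
      (r ^ a / Gamma a) • ∫ s in Ioi 0, (s ^ (a - 1) * exp (-(r * s))) • f s := by
  have h_pdf (s : ℝ) : (gammaPDF a r s).toReal • f s =
      (Ici 0).indicator (fun s => (r ^ a / Gamma a) • (s ^ (a - 1) * exp (-(r * s))) • f s) s := by
    rw [gammaPDF, ENNReal.toReal_ofReal (gammaPDFReal_nonneg ha hr s), gammaPDFReal,
      indicator_apply]
    simp only [mem_Ici, ite_smul, zero_smul, smul_smul, mul_assoc]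
  rw [gammaMeasure, integral_withDensity_eq_integral_toReal_smul (measurable_gammaPDF a r)
    (ae_of_all _ fun _ => ENNReal.ofReal_lt_top)]
  simp only [h_pdf]
  rw [integral_indicator measurableSet_Ici, integral_Ici_eq_integral_Ioi, integral_smul]

theorem integral_exp_neg_mul_inv_gammaMeasure {n : ℕ} (hn : n ≠ 0) {z : ℝ} (hr : 0 < r)
    (hz : 0 < z) :
    ∫ s, exp (-(z * s⁻¹)) ∂gammaMeasure n r =
      2 / Gamma n * (r * z) ^ ((n : ℝ) / 2) * besselK n (2 * √(r * z)) := by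
  have h_scale : r ^ (n : ℝ) * (z / r) ^ ((n : ℝ) / 2) = (r * z) ^ ((n : ℝ) / 2) := by
    have h_sq : r ^ (n : ℝ) = (r * r) ^ ((n : ℝ) / 2) := by
      rw [mul_rpow hr.le hr.le, ← rpow_add hr, add_halves]
    rw [h_sq, ← mul_rpow (by positivity) (by positivity)]
    field_simp
  rw [integral_gammaMeasure (by positivity) hr]
  simp only [smul_eq_mul]
  rw [integral_rpow_mul_exp_neg_mul_mul_exp_neg_mul_inv _ hr hz,
    ← two_mul_besselK n (by positivity), ← h_scale]
  ring

theorem integral_inv_gammaMeasure (ha : 1 < a) (hr : 0 < r) :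
    ∫ s, s⁻¹ ∂gammaMeasure a r = r / (a - 1) := by
  have ha0 : 0 < a - 1 := sub_pos.2 ha
  have h_integrand : ∀ s ∈ Ioi (0 : ℝ),
      (s ^ (a - 1) * exp (-(r * s))) • s⁻¹ = s ^ (a - 1 - 1) * exp (-(r * s)) := by
    intro s hs
    rw [rpow_sub_one (ne_of_gt hs) (a - 1), smul_eq_mul]
    ring
  have h_Gamma : Gamma a = (a - 1) * Gamma (a - 1) := by
    simpa only [sub_add_cancel] using Gamma_add_one ha0.ne'
  rw [integral_gammaMeasure (by linarith) hr, setIntegral_congr_fun measurableSet_Ioi h_integrand,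
    integral_rpow_mul_exp_neg_mul_Ioi ha0 hr, h_Gamma, one_div, inv_rpow hr.le, rpow_sub_one hr.ne',
    smul_eq_mul]
  have := (Gamma_pos_of_pos ha0).ne'
  field_simp

theorem integrable_inv_gammaMeasure (ha : 1 < a) (hr : 0 < r) :
    Integrable (fun s => s⁻¹) (gammaMeasure a r) := by
  refine .of_integral_ne_zero ?_
  rw [integral_inv_gammaMeasure ha hr]
  exact (div_pos hr (sub_pos.2 ha)).ne'

end GammaDistribution

theorem tendsto_inv_mul_integral_one_sub_exp_neg_mul {Ω : Type*} [MeasurableSpace Ω]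
    {μ : Measure Ω} {X : Ω → ℝ} (hX : Integrable X μ) (hX_nonneg : 0 ≤ᵐ[μ] X) :
    Tendsto (fun z : ℝ => z⁻¹ * ∫ ω, (1 - exp (-(z * X ω))) ∂μ) (𝓝[>] 0) (𝓝 (∫ ω, X ω ∂μ)) := by
  simp only [← integral_const_mul]
  refine tendsto_integral_filter_of_dominated_convergence X ?_ ?_ hX ?_
  · have := hX.aestronglyMeasurable
    exact Eventually.of_forall fun z => by fun_prop
  · filter_upwards [self_mem_nhdsWithin] with z (hz : 0 < z)
    filter_upwards [hX_nonneg] with ω (hω : 0 ≤ X ω)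
    have h_nonneg : 0 ≤ 1 - exp (-(z * X ω)) := by
      rw [sub_nonneg, exp_le_one_iff, neg_nonpos]
      positivity
    rw [norm_of_nonneg (by positivity), inv_mul_le_iff₀ hz]
    linarith [one_sub_le_exp_neg (z * X ω)]
  · refine ae_of_all _ fun ω => ?_
    have h_deriv : HasDerivAt (fun z => 1 - exp (-(z * X ω))) (X ω) 0 := by
      simpa using ((hasDerivAt_mul_const (x := (0 : ℝ)) (X ω)).neg.exp).const_sub 1
    simpa using h_deriv.tendsto_slope_zero_right

theorem tendsto_neg_log_div_log_of_tendsto_rpow_mul {f : ℝ → ℝ} {d A : ℝ} (hA : A ≠ 0)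
    (h : Tendsto (fun γ => γ ^ d * f γ) atTop (𝓝 A)) :
    Tendsto (fun γ => -log (f γ) / log γ) atTop (𝓝 d) := by
  have h_err : Tendsto (fun γ => d - log (γ ^ d * f γ) / log γ) atTop (𝓝 d) := by
    simpa using ((h.log hA).div_atTop tendsto_log_atTop).const_sub d
  refine h_err.congr' ?_
  filter_upwards [h.eventually_ne hA, eventually_gt_atTop 1] with γ hγ_ne hγ
  have h_log : log γ ≠ 0 := (log_pos hγ).ne'
  rw [log_mul (left_ne_zero_of_mul hγ_ne) (right_ne_zero_of_mul hγ_ne), log_rpow (by linarith)]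
  field_simp
  ring

section Outage

variable {m : ℕ} {c lam : ℝ}

theorem outageP_eq_integral_gammaMeasure (hm : m ≠ 0) {γ : ℝ} (hz : 0 < c / (lam * γ)) :
    outageP m c lam γ = ∫ s, (1 - exp (-(c / (lam * γ) * s⁻¹))) ∂gammaMeasure m 1 := by
  have hm_pos : (0 : ℝ) < m := by positivity
  have := isProbabilityMeasure_gammaMeasure hm_pos one_pos
  have h_laplace := integral_exp_neg_mul_inv_gammaMeasure hm one_pos hz
  have h_int : Integrable (fun s => exp (-(c / (lam * γ) * s⁻¹))) (gammaMeasure m 1) := by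
    refine Integrable.of_bound (by fun_prop) 1 ?_
    filter_upwards [ae_pos_gammaMeasure m 1] with s hs
    rw [norm_of_nonneg (by positivity), exp_le_one_iff, neg_nonpos]
    positivity
  have h_factorial : (Nat.factorial (m - 1) : ℝ) = Gamma m := by
    rw [← Gamma_nat_eq_factorial, ← Nat.cast_add_one, Nat.sub_one_add_one hm]
  rw [integral_sub (integrable_const 1) h_int, h_laplace, integral_const, probReal_univ]
  simp only [outageP, h_factorial, one_mul, smul_eq_mul]

theorem tendsto_mul_outageP (hm : 1 < m) (hc : 0 < c) (hlam : 0 < lam) :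
    Tendsto (fun γ => γ * outageP m c lam γ) atTop (𝓝 (c / lam / (m - 1))) := by
  have hm' : (1 : ℝ) < m := by exact_mod_cast hm
  have h_mean := tendsto_inv_mul_integral_one_sub_exp_neg_mul
    (integrable_inv_gammaMeasure hm' one_pos)
    ((ae_pos_gammaMeasure m 1).mono fun s hs => (inv_pos.2 hs).le)
  rw [integral_inv_gammaMeasure hm' one_pos] at h_mean
  have h_threshold : Tendsto (fun γ => c / (lam * γ)) atTop (𝓝[>] 0) := by
    refine tendsto_nhdsWithin_iff.2 ⟨(tendsto_id.const_mul_atTop hlam).const_div_atTop c, ?_⟩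
    filter_upwards [eventually_gt_atTop 0] with γ hγ
    exact div_pos hc (mul_pos hlam hγ)
  have h_lim := (h_mean.comp h_threshold).const_mul (c / lam)
  rw [mul_one_div] at h_lim
  refine h_lim.congr' ?_
  filter_upwards [eventually_gt_atTop 0] with γ hγ
  rw [outageP_eq_integral_gammaMeasure (by omega) (by positivity), Function.comp_apply,
    ← mul_assoc]
  congr 1
  field_simp

end Outage

/-- The true diversity order equals one: `lim_{γ → ∞} −ln(P(γ))/ln(γ) = 1`. -/
theorem diversity_order_eq_one (m : ℕ) (hm : 2 ≤ m) (c lam : ℝ) (hc : 0 < c)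
    (hlam : 0 < lam) :
    Filter.Tendsto (fun γ : ℝ => -Real.log (outageP m c lam γ) / Real.log γ)
      Filter.atTop (nhds 1) := by
  have h_const : c / lam / (m - 1) ≠ 0 := by
    have : (1 : ℝ) < m := by exact_mod_cast hm
    have : (0 : ℝ) < m - 1 := by linarith
    positivity
  refine tendsto_neg_log_div_log_of_tendsto_rpow_mul h_const ?_
  simpa only [rpow_one] using tendsto_mul_outageP hm hc hlam
end
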